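/- Let A = A₁A₂ with dimensions d_{A₁}, d_{A₂}, d_A = d_{A₁}d_{A₂}. Let ρ_{AR} = Φ_{A₁R} ⊗ |0⟩⟨0|_{A₂} where Φ_{A₁R} is the maximally entangled state between A₁ and R (with H_R ≅ H_{A₁}). For U_A = D^X D^Z a product of an independent uniform random X-diagonal and Z-diagonal unitary, E[ tr( (tr_{A₂}(U_A ρ_{AR} U_A†))² ) ] = 1/d_{A₁} + 1/d_{A₂} − 1/d_A. -/

import Mathlib

/-!
Write `d₁ = 2^N1`, `d₂ = 2^N2`, `d = d₁ d₂`, and index the Hadamard basis of `A` by pairs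
`k = (k₁, k₂)`. Since `ρ_{AR}` is rank one (`rhoAR_eq`), the reduced state factors as
`σ = F G Fᴴ` (`sigma_eq`), where `G_{kl} = d⁻¹ δ_{k₂ l₂} e^{i(χ_k − χ_l)}` contains only the
`X`-phases, and `F` contains the `Z`-phases but has the phase-free Gram matrix
`(Fᴴ F)_{kl} = δ_{k₁ l₁}` (`Fmat_gram`). Both deltas come from the orthogonality of the Hadamard
matrix (`hadR_orth`). By cyclicity of the trace (`purity_eq`),

  `tr σ² = d⁻² ∑_{klmn} δ_{k₂ l₂} δ_{l₁ m₁} δ_{m₂ n₂} δ_{n₁ k₁} e^{i(χ_k − χ_l + χ_m − χ_n)}`,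

which does not depend on `ζ`. Averaging over `χ` replaces the exponential by
`δ_{kl} δ_{mn} + δ_{kn} δ_{lm} − δ_{klmn}` (`integral_phase4`), and counting indices (`index_sum`)
gives `d⁻² (d₁ d₂² + d₁² d₂ − d₁ d₂) = 1/d₁ + 1/d₂ − 1/d`.
-/


open Matrix MeasureTheory
open scoped Kronecker

/-- Computational-basis index set for `N` qubits. -/
abbrev QIdx (N : ℕ) := Fin N → Fin 2

/-- The `N`-qubit Hadamard transform, `H x y = (−1)^{x·y}/√(2^N)`;
its columns form the Pauli-`X` (Hadamard) basis. -/
noncomputable def hadamardN (N : ℕ) : Matrix (QIdx N) (QIdx N) ℂ :=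
  fun x y => ((-1 : ℂ) ^ (∑ k, (x k).val * (y k).val)) / (Real.sqrt (2 ^ N) : ℝ)

/-- The initial state `ρ_{AR} = Φ_{A₁R} ⊗ |0⟩⟨0|_{A₂}` on `A₁A₂R`, where `Φ_{A₁R}` is
maximally entangled and `A₁ ≅ R` are `N₁`-qubit systems, `A₂` an `N₂`-qubit system. -/
noncomputable def rhoAR (N1 N2 : ℕ) :
    Matrix ((QIdx N1 × QIdx N2) × QIdx N1) ((QIdx N1 × QIdx N2) × QIdx N1) ℂ :=
  fun p q =>
    (if p.1.1 = p.2 ∧ q.1.1 = q.2 then ((2 ^ N1 : ℝ)⁻¹ : ℂ) else 0) *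
    (if p.1.2 = 0 ∧ q.1.2 = 0 then 1 else 0)

/-- The random `Z`-diagonal unitary on `A = A₁A₂` with phases `ζ`. -/
noncomputable def DZ {N1 N2 : ℕ} (ζ : QIdx N1 × QIdx N2 → ℝ) :
    Matrix (QIdx N1 × QIdx N2) (QIdx N1 × QIdx N2) ℂ :=
  Matrix.diagonal fun a => Complex.exp (ζ a * Complex.I)

/-- The random `X`-diagonal unitary on `A = A₁A₂` with phases `χ`: diagonal in the
Hadamard (Pauli-`X`) basis. -/
noncomputable def DX {N1 N2 : ℕ} (χ : QIdx N1 × QIdx N2 → ℝ) :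
    Matrix (QIdx N1 × QIdx N2) (QIdx N1 × QIdx N2) ℂ :=
  (hadamardN N1 ⊗ₖ hadamardN N2) * DZ χ * (hadamardN N1 ⊗ₖ hadamardN N2)

/-- Partial trace over `A₂` of an operator on `(A₁A₂) ⊗ R`. -/
noncomputable def ptrA2 {N1 N2 : ℕ}
    (M : Matrix ((QIdx N1 × QIdx N2) × QIdx N1) ((QIdx N1 × QIdx N2) × QIdx N1) ℂ) :
    Matrix (QIdx N1 × QIdx N1) (QIdx N1 × QIdx N1) ℂ :=
  fun p q => ∑ a : QIdx N2, M ((p.1, a), p.2) ((q.1, a), q.2)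

/-- The purity `tr(σ²)` of `σ = tr_{A₂}(U_A ρ_{AR} U_A†)` for `U_A = D^X D^Z`. -/
noncomputable def purity (N1 N2 : ℕ) (ζ χ : QIdx N1 × QIdx N2 → ℝ) : ℝ :=
  let U := (DX χ * DZ (N1 := N1) (N2 := N2) ζ) ⊗ₖ (1 : Matrix (QIdx N1) (QIdx N1) ℂ)
  let σ := ptrA2 (U * rhoAR N1 N2 * Uᴴ)
  ((σ * σ).trace).re

/-! ### The Hadamard matrix -/

/-- The entries of `hadamardN` as real numbers. -/
noncomputable def hadR (N : ℕ) (x y : QIdx N) : ℝ :=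
  ((-1 : ℝ) ^ (∑ k, (x k).val * (y k).val)) / Real.sqrt (2 ^ N)

lemma hadamardN_eq (N : ℕ) (x y : QIdx N) : hadamardN N x y = (hadR N x y : ℂ) := by
  simp [hadamardN, hadR]

lemma hadR_comm (N : ℕ) (x y : QIdx N) : hadR N x y = hadR N y x := by
  simp [hadR, mul_comm]

/-- All entries in the zero column are `1/√(2^N)`. -/
lemma hadR_zero (N : ℕ) (x : QIdx N) : hadR N x 0 * hadR N x 0 = ((2 : ℝ) ^ N)⁻¹ := by
  simp [hadR, ← mul_inv]

/-- Orthogonality of the columns: the sum over bit strings factors into a product over bits. -/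
lemma hadR_orth (N : ℕ) (k m : QIdx N) :
    ∑ x, hadR N x k * hadR N x m = if k = m then 1 else 0 := by
  have h1 : ∀ x : QIdx N, hadR N x k * hadR N x m =
      (∏ i, (-1 : ℝ) ^ ((x i).val * (k i).val) * (-1 : ℝ) ^ ((x i).val * (m i).val))
        / 2 ^ N := by
    intro x
    rw [hadR, hadR, div_mul_div_comm, Real.mul_self_sqrt (by positivity),
      Finset.prod_mul_distrib, Finset.prod_pow_eq_pow_sum, Finset.prod_pow_eq_pow_sum]
  simp_rw [h1]
  rw [← Finset.sum_div, ← Fintype.prod_sum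
    (fun i (b : Fin 2) => (-1 : ℝ) ^ (b.val * (k i).val) * (-1 : ℝ) ^ (b.val * (m i).val))]
  have h2 : ∀ u v : Fin 2, ∑ b : Fin 2, (-1 : ℝ) ^ (b.val * u.val) * (-1 : ℝ) ^ (b.val * v.val)
      = if u = v then 2 else 0 := by
    intro u v
    fin_cases u <;> fin_cases v <;> norm_num [Fin.sum_univ_two]
  simp_rw [h2]
  split_ifs with h
  · subst h
    simp
  · obtain ⟨i, hi⟩ := Function.ne_iff.1 h
    rw [Finset.prod_eq_zero (Finset.mem_univ i) (if_neg hi), zero_div]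

lemma integral_exp_int (c : ℤ) :
    ∫ t in Set.Ico (0 : ℝ) (2 * Real.pi), Complex.exp (c * t * Complex.I) =
      if c = 0 then (2 * Real.pi : ℂ) else 0 := by
  rw [integral_Ico_eq_integral_Ioc, ← intervalIntegral.integral_of_le Real.two_pi_pos.le]
  split_ifs with h
  · subst h
    simp
  · have hc : (c : ℂ) * Complex.I ≠ 0 := by simp [h]
    have := integral_exp_mul_complex (a := 0) (b := 2 * Real.pi) hc
    have e : ∀ t : ℝ, (c : ℂ) * t * Complex.I = c * Complex.I * t := fun t => by ring
    simp_rw [e]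
    rw [this]
    have e2 : (c : ℂ) * Complex.I * ((2 * Real.pi : ℝ) : ℂ) = c * (2 * Real.pi * Complex.I) := by
      push_cast; ring
    rw [e2, Complex.exp_int_mul_two_pi_mul_I]
    simp

/-! ### Second moment of independent uniform phases -/

section Phases

variable {ι : Type*} [Fintype ι] [DecidableEq ι]

set_option linter.unusedSectionVars false

/-- The degree-`(2,2)` monomial `e^{i(χ_k − χ_l + χ_m − χ_n)}` in the phases. -/
noncomputable def phase4 (χ : ι → ℝ) (k l m n : ι) : ℂ :=
  Complex.exp (χ k * Complex.I) * star (Complex.exp (χ l * Complex.I)) *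
    (Complex.exp (χ m * Complex.I) * star (Complex.exp (χ n * Complex.I)))

/-- The integer coefficient of `χ_j` in the exponent of `phase4 χ k l m n`. -/
def expo (k l m n j : ι) : ℤ :=
  (if j = k then 1 else 0) - (if j = l then 1 else 0) + (if j = m then 1 else 0) -
    (if j = n then 1 else 0)

lemma phase4_eq_prod (χ : ι → ℝ) (k l m n : ι) :
    phase4 χ k l m n = ∏ j, Complex.exp (expo k l m n j * χ j * Complex.I) := by
  have hs : ∀ x : ℝ, star (Complex.exp (x * Complex.I)) = Complex.exp (-(x * Complex.I)) := by
    intro x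
    rw [Complex.star_def, ← Complex.exp_conj]
    simp
  rw [phase4, hs, hs, ← Complex.exp_sum, ← Complex.exp_add, ← Complex.exp_add, ← Complex.exp_add]
  congr 1
  simp [expo, sub_mul, add_mul, Finset.sum_add_distrib, Finset.sum_sub_distrib]
  ring

/-- The exponents all vanish iff `{k, m} = {l, n}` as multisets. -/
lemma expo_eq_zero_iff (k l m n : ι) :
    (∀ j, expo k l m n j = 0) ↔ (k = l ∧ m = n) ∨ (k = n ∧ l = m) := by
  constructor
  · intro h
    have hk := h k
    have hm := h m
    have hl := h l
    simp only [expo] at hk hm hl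
    grind
  · rintro (⟨rfl, rfl⟩ | ⟨rfl, rfl⟩) j <;> simp [expo]

/-- The (unnormalised) second moment: the Wick-type sum over the two pairings, with the
diagonal `k = l = m = n`, which both pairings count, subtracted once. -/
lemma integral_phase4 (k l m n : ι) :
    ∫ χ in Set.pi Set.univ (fun _ : ι => Set.Ico (0 : ℝ) (2 * Real.pi)), phase4 χ k l m n =
      (2 * Real.pi : ℂ) ^ Fintype.card ι *
        ((if k = l ∧ m = n then 1 else 0) + (if k = n ∧ l = m then 1 else 0)
          - (if k = l ∧ l = m ∧ m = n then 1 else 0)) := by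
  simp_rw [phase4_eq_prod]
  rw [volume_pi, Measure.restrict_pi_pi,
    integral_fintype_prod_eq_prod (𝕜 := ℂ)
      (fun j (t : ℝ) => Complex.exp (expo k l m n j * t * Complex.I))]
  simp_rw [integral_exp_int]
  by_cases h : ∀ j, expo k l m n j = 0
  · have h' := (expo_eq_zero_iff k l m n).1 h
    simp only [h, if_true, Finset.prod_const, Finset.card_univ]
    have : ((if k = l ∧ m = n then 1 else 0) + (if k = n ∧ l = m then 1 else 0)
          - (if k = l ∧ l = m ∧ m = n then 1 else 0) : ℂ) = 1 := by
      split_ifs <;> first | (exfalso; grind) | norm_num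
    rw [this, mul_one]
  · have h' := (expo_eq_zero_iff k l m n).not.1 h
    push Not at h
    obtain ⟨j, hj⟩ := h
    rw [Finset.prod_eq_zero (Finset.mem_univ j) (if_neg hj)]
    have : ((if k = l ∧ m = n then 1 else 0) + (if k = n ∧ l = m then 1 else 0)
          - (if k = l ∧ l = m ∧ m = n then 1 else 0) : ℂ) = 0 := by
      split_ifs <;> first | (exfalso; grind) | norm_num
    rw [this, mul_zero]

lemma continuous_phase4 (k l m n : ι) : Continuous fun χ : ι → ℝ => phase4 χ k l m n := by
  unfold phase4
  fun_prop

lemma integrableOn_phase4 (k l m n : ι) :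
    IntegrableOn (fun χ : ι → ℝ => phase4 χ k l m n)
      (Set.pi Set.univ (fun _ : ι => Set.Ico (0 : ℝ) (2 * Real.pi))) := by
  have hK : IsCompact (Set.pi Set.univ (fun _ : ι => Set.Icc (0 : ℝ) (2 * Real.pi))) :=
    isCompact_univ_pi fun _ => isCompact_Icc
  exact ((continuous_phase4 k l m n).continuousOn.integrableOn_compact hK).mono_set
    (Set.pi_mono fun _ _ => Set.Ico_subset_Icc_self)

lemma volume_phases :
    (volume.real (Set.pi Set.univ (fun _ : ι => Set.Ico (0 : ℝ) (2 * Real.pi)))) =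
      (2 * Real.pi) ^ Fintype.card ι := by
  rw [Measure.real, volume_pi, Measure.pi_pi]
  simp [Real.pi_pos.le]

end Phases

/-! ### The purity as a polynomial in the phases -/

section Purity

variable {N1 N2 : ℕ}

/-- The factor `F` in `σ = F G Fᴴ`, with rows indexed by `A₁R` and columns by the Hadamard basis
of `A`. It contains all of the `Z`-phases. -/
noncomputable def Fmat (ζ : QIdx N1 × QIdx N2 → ℝ) :
    Matrix (QIdx N1 × QIdx N1) (QIdx N1 × QIdx N2) ℂ :=
  fun p k => hadR N1 p.1 k.1 * hadR N1 k.1 p.2 * Complex.exp (ζ (p.2, 0) * Complex.I)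

/-- The core `G` in `σ = F G Fᴴ`: the outer product of the `X`-phases, masked by `δ_{k₂ l₂}`. -/
noncomputable def Gmat (χ : QIdx N1 × QIdx N2 → ℝ) :
    Matrix (QIdx N1 × QIdx N2) (QIdx N1 × QIdx N2) ℂ :=
  fun k l => (2 ^ (N1 + N2) : ℂ)⁻¹ * (if k.2 = l.2 then 1 else 0) *
    (Complex.exp (χ k * Complex.I) * star (Complex.exp (χ l * Complex.I)))

lemma exp_mul_star (x : ℝ) :
    Complex.exp (x * Complex.I) * star (Complex.exp (x * Complex.I)) = 1 := by
  rw [Complex.star_def, Complex.mul_conj, Complex.normSq_eq_norm_sq, Complex.norm_exp_ofReal_mul_I]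
  simp

/-- The Gram matrix of the columns of `F` is `δ_{k₁ l₁}`; the `Z`-phases cancel in it. -/
lemma Fmat_gram (ζ : QIdx N1 × QIdx N2 → ℝ) :
    (Fmat ζ)ᴴ * Fmat ζ = Matrix.of fun k l => if k.1 = l.1 then 1 else 0 := by
  ext k l
  have h : ∀ p : QIdx N1 × QIdx N1, star (Fmat ζ p k) * Fmat ζ p l =
      ((hadR N1 p.1 k.1 * hadR N1 p.1 l.1 : ℝ) : ℂ) *
      ((hadR N1 p.2 k.1 * hadR N1 p.2 l.1 : ℝ) : ℂ) := by
    intro p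
    have := exp_mul_star (ζ (p.2, 0))
    simp only [Fmat, star_mul', Complex.star_def, Complex.conj_ofReal, Complex.ofReal_mul] at this ⊢
    rw [hadR_comm N1 k.1, hadR_comm N1 l.1]
    linear_combination ((hadR N1 p.1 k.1 : ℂ) * hadR N1 p.1 l.1 * hadR N1 p.2 k.1
      * hadR N1 p.2 l.1) * this
  simp only [Matrix.mul_apply, Matrix.conjTranspose_apply, h, Fintype.sum_prod_type]
  rw [← Finset.sum_mul_sum, ← Complex.ofReal_sum, hadR_orth]
  split_ifs <;> simp [*]

/-- `ρ_{AR}` is a multiple of a rank-one projection, onto `∑ᵢ |i⟩|0⟩|i⟩`. -/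
lemma rhoAR_eq :
    rhoAR N1 N2 = (2 ^ N1 : ℂ)⁻¹ • Matrix.vecMulVec
      (fun p => if p.1 = (p.2, 0) then 1 else 0) (star fun p => if p.1 = (p.2, 0) then 1 else 0) := by
  ext ⟨⟨x, a⟩, r⟩ ⟨⟨y, b⟩, s⟩
  simp only [rhoAR, Matrix.smul_apply, Matrix.vecMulVec_apply, Prod.mk.injEq, Pi.star_apply]
  by_cases h1 : x = r <;> by_cases h2 : y = s <;> by_cases h3 : a = 0 <;> by_cases h4 : b = 0 <;>
    simp [h1, h2, h3, h4]

lemma kron_mulVec (V : Matrix (QIdx N1 × QIdx N2) (QIdx N1 × QIdx N2) ℂ)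
    (p : (QIdx N1 × QIdx N2) × QIdx N1) :
    ((V ⊗ₖ (1 : Matrix (QIdx N1) (QIdx N1) ℂ)) *ᵥ
      fun q => if q.1 = (q.2, 0) then 1 else 0) p = V p.1 (p.2, 0) := by
  simp [Matrix.mulVec, dotProduct, Fintype.sum_prod_type_right, Matrix.one_apply]

lemma sigma_eq_entries (V : Matrix (QIdx N1 × QIdx N2) (QIdx N1 × QIdx N2) ℂ)
    (p q : QIdx N1 × QIdx N1) :
    ptrA2 (V ⊗ₖ (1 : Matrix (QIdx N1) (QIdx N1) ℂ) * rhoAR N1 N2 *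
      (V ⊗ₖ (1 : Matrix (QIdx N1) (QIdx N1) ℂ))ᴴ) p q =
    (2 ^ N1 : ℂ)⁻¹ * ∑ a, V (p.1, a) (p.2, 0) * star (V (q.1, a) (q.2, 0)) := by
  rw [rhoAR_eq, Matrix.mul_smul, Matrix.smul_mul, Matrix.mul_vecMulVec, Matrix.vecMulVec_mul,
    ← Matrix.star_mulVec]
  simp only [ptrA2, Matrix.smul_apply, Matrix.vecMulVec_apply, Pi.star_apply, kron_mulVec,
    smul_eq_mul, Finset.mul_sum]

lemma DXDZ_apply (ζ χ : QIdx N1 × QIdx N2 → ℝ) (x r : QIdx N1) (a : QIdx N2) :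
    (DX χ * DZ ζ) (x, a) (r, 0) =
      ∑ k, Fmat ζ (x, r) k * (hadR N2 a k.2 * hadR N2 k.2 0 * Complex.exp (χ k * Complex.I)) := by
  rw [DZ, Matrix.mul_diagonal, DX, DZ, Matrix.mul_apply, Finset.sum_mul]
  refine Finset.sum_congr rfl fun k _ => ?_
  rw [Matrix.mul_diagonal]
  simp only [Matrix.kroneckerMap_apply, hadamardN_eq, Fmat]
  ring

/-- Summing the output index of `A₂` gives the factor `δ_{k₂ l₂}` of `G`. -/
lemma core_sum (χ : QIdx N1 × QIdx N2 → ℝ) (k l : QIdx N1 × QIdx N2) :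
    (2 ^ N1 : ℂ)⁻¹ * ∑ a, (hadR N2 a k.2 * hadR N2 k.2 0 * Complex.exp (χ k * Complex.I)) *
      star (hadR N2 a l.2 * hadR N2 l.2 0 * Complex.exp (χ l * Complex.I)) = Gmat χ k l := by
  have h : ∀ a, ((hadR N2 a k.2 : ℂ) * hadR N2 k.2 0 * Complex.exp (χ k * Complex.I)) *
      star (hadR N2 a l.2 * hadR N2 l.2 0 * Complex.exp (χ l * Complex.I)) =
      ((hadR N2 a k.2 * hadR N2 a l.2 : ℝ) : ℂ) * (((hadR N2 k.2 0 * hadR N2 l.2 0 : ℝ) : ℂ) *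
        (Complex.exp (χ k * Complex.I) * star (Complex.exp (χ l * Complex.I)))) := by
    intro a
    simp only [star_mul', Complex.star_def, Complex.conj_ofReal, Complex.ofReal_mul]
    ring
  simp_rw [h]
  rw [← Finset.sum_mul, ← Complex.ofReal_sum, hadR_orth, Gmat]
  split_ifs with hkl
  · rw [hkl, hadR_zero, pow_add, mul_inv]
    push_cast
    ring
  · simp

lemma sigma_eq (ζ χ : QIdx N1 × QIdx N2 → ℝ) :
    ptrA2 ((DX χ * DZ ζ) ⊗ₖ (1 : Matrix (QIdx N1) (QIdx N1) ℂ) * rhoAR N1 N2 *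
      ((DX χ * DZ ζ) ⊗ₖ (1 : Matrix (QIdx N1) (QIdx N1) ℂ))ᴴ) =
    Fmat ζ * Gmat χ * (Fmat ζ)ᴴ := by
  ext ⟨x, r⟩ ⟨y, s⟩
  rw [sigma_eq_entries]
  simp only [DXDZ_apply]
  simp only [Matrix.mul_apply, Matrix.conjTranspose_apply, star_sum,
    Finset.sum_mul_sum, ← core_sum]
  rw [Finset.sum_comm, Finset.mul_sum]
  simp_rw [Finset.sum_mul]
  rw [Finset.sum_comm]
  refine Finset.sum_congr rfl fun k _ => ?_
  rw [Finset.sum_comm, Finset.mul_sum]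
  refine Finset.sum_congr rfl fun l _ => ?_
  simp only [Finset.mul_sum, Finset.sum_mul]
  refine Finset.sum_congr rfl fun a _ => ?_
  rw [star_mul']
  ring

/-- `tr(σ²) = tr(G E G E)` with `E = Fᴴ F` written out in the `X`-phases. In particular the purity
does not depend on the `Z`-phases `ζ`. -/
lemma purity_eq (ζ χ : QIdx N1 × QIdx N2 → ℝ) :
    purity N1 N2 ζ χ = (∑ k : QIdx N1 × QIdx N2, ∑ l : QIdx N1 × QIdx N2,
      ∑ m : QIdx N1 × QIdx N2, ∑ n : QIdx N1 × QIdx N2, ((2 ^ (N1 + N2) : ℂ)⁻¹ ^ 2 *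
      (if k.2 = l.2 ∧ l.1 = m.1 ∧ m.2 = n.2 ∧ n.1 = k.1 then 1 else 0)) *
        phase4 χ k l m n).re := by
  have key : ∀ (F : Matrix (QIdx N1 × QIdx N1) (QIdx N1 × QIdx N2) ℂ)
      (G : Matrix (QIdx N1 × QIdx N2) (QIdx N1 × QIdx N2) ℂ),
      (F * G * Fᴴ * (F * G * Fᴴ)).trace = (G * ((Fᴴ * F) * (G * (Fᴴ * F)))).trace := by
    intro F G
    rw [Matrix.mul_assoc F, Matrix.mul_assoc F, Matrix.trace_mul_comm F]
    simp only [Matrix.mul_assoc]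
  rw [purity]
  simp only [sigma_eq]
  rw [key, Fmat_gram]
  congr 1
  simp only [Matrix.trace, Matrix.diag, Matrix.mul_apply, Matrix.of_apply, Finset.mul_sum]
  refine Finset.sum_congr rfl fun k _ => Finset.sum_congr rfl fun l _ =>
    Finset.sum_congr rfl fun m _ => Finset.sum_congr rfl fun n _ => ?_
  rw [Gmat, Gmat, phase4]
  by_cases h1 : k.2 = l.2 <;> by_cases h2 : l.1 = m.1 <;> by_cases h3 : m.2 = n.2 <;>
    by_cases h4 : n.1 = k.1 <;> simp [h1, h2, h3, h4]
  ring

/-- The two pairings and their overlap contribute `d₁ d₂²`, `d₁² d₂` and `d₁ d₂`. -/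
lemma index_sum :
    ∑ k : QIdx N1 × QIdx N2, ∑ l : QIdx N1 × QIdx N2, ∑ m : QIdx N1 × QIdx N2,
      ∑ n : QIdx N1 × QIdx N2,
      (if k.2 = l.2 ∧ l.1 = m.1 ∧ m.2 = n.2 ∧ n.1 = k.1 then 1 else 0 : ℂ) *
        ((if k = l ∧ m = n then 1 else 0) + (if k = n ∧ l = m then 1 else 0)
          - (if k = l ∧ l = m ∧ m = n then 1 else 0)) =
    2 ^ N1 * (2 ^ N2) ^ 2 + (2 ^ N1) ^ 2 * 2 ^ N2 - 2 ^ N1 * 2 ^ N2 := by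
  -- Nesting the conditions lets each sum with a Kronecker delta be eliminated in turn.
  have e : ∀ k l m n : QIdx N1 × QIdx N2,
      (if k.2 = l.2 ∧ l.1 = m.1 ∧ m.2 = n.2 ∧ n.1 = k.1 then 1 else 0 : ℂ) *
        ((if k = l ∧ m = n then 1 else 0) + (if k = n ∧ l = m then 1 else 0)
          - (if k = l ∧ l = m ∧ m = n then 1 else 0)) =
      (if m = n then if k = l then if k.1 = m.1 then 1 else 0 else 0 else 0) +
        (if k = n then if l = m then if k.2 = l.2 then 1 else 0 else 0 else 0) -
        (if m = n then if l = m then if k = l then 1 else 0 else 0 else 0) := by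
    intro k l m n
    by_cases h1 : k = l ∧ m = n
    · obtain ⟨rfl, rfl⟩ := h1
      by_cases h : k = m <;> by_cases h' : k.1 = m.1 <;> simp_all
    · by_cases h2 : k = n ∧ l = m
      · obtain ⟨rfl, rfl⟩ := h2
        by_cases h : k = l <;> by_cases h' : k.2 = l.2 <;> simp_all
      · grind
  simp_rw [e, Finset.sum_sub_distrib, Finset.sum_add_distrib]
  simp only [Finset.sum_ite_eq, Finset.mem_univ, if_true]
  congr 1
  · congr 1
    · have h : ∀ k l : QIdx N1 × QIdx N2,
          (∑ m : QIdx N1 × QIdx N2, if k = l then if k.1 = m.1 then 1 else 0 else 0 : ℂ) =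
            if k = l then 2 ^ N2 else 0 := by
        intro k l
        split_ifs
        · rw [Fintype.sum_prod_type_right]
          simp only [Finset.sum_ite_eq, Finset.mem_univ, if_true]
          simp
        · simp
      simp_rw [h]
      simp only [Finset.sum_ite_eq, Finset.mem_univ, if_true]
      simp
      ring
    · have h : ∀ k : QIdx N1 × QIdx N2,
          (∑ l : QIdx N1 × QIdx N2, if k.2 = l.2 then 1 else 0 : ℂ) = 2 ^ N1 := by
        intro k
        rw [Fintype.sum_prod_type]
        simp only [Finset.sum_ite_eq, Finset.mem_univ, if_true]
        simp
      simp_rw [h]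
      simp
      ring
  · simp

end Purity

/-- For `ρ_{AR} = Φ_{A₁R} ⊗ |0⟩⟨0|_{A₂}` and `U_A = D^X D^Z` with independent uniform
phases, `𝔼[tr((tr_{A₂}(U_A ρ_{AR} U_A†))²)] = 1/d_{A₁} + 1/d_{A₂} − 1/d_A`. -/
theorem stmt13 (N1 N2 : ℕ) :
    (((2 * Real.pi) ^ (2 ^ (N1 + N2)))⁻¹) ^ 2 *
      ∫ ζ in Set.pi Set.univ (fun _ : QIdx N1 × QIdx N2 => Set.Ico (0 : ℝ) (2 * Real.pi)),
        ∫ χ in Set.pi Set.univ (fun _ : QIdx N1 × QIdx N2 => Set.Ico (0 : ℝ) (2 * Real.pi)),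
          purity N1 N2 ζ χ =
    (2 ^ N1 : ℝ)⁻¹ + (2 ^ N2 : ℝ)⁻¹ - (2 ^ (N1 + N2) : ℝ)⁻¹ := by
  have hcard : Fintype.card (QIdx N1 × QIdx N2) = 2 ^ (N1 + N2) := by
    simp [pow_add]
  simp_rw [purity_eq]
  have hphase : ∀ k l m n : QIdx N1 × QIdx N2, Integrable (fun χ => ((2 ^ (N1 + N2) : ℂ)⁻¹ ^ 2 *
      (if k.2 = l.2 ∧ l.1 = m.1 ∧ m.2 = n.2 ∧ n.1 = k.1 then 1 else 0)) *
        phase4 χ k l m n) (volume.restrict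
      (Set.pi Set.univ (fun _ : QIdx N1 × QIdx N2 => Set.Ico (0 : ℝ) (2 * Real.pi)))) :=
    fun k l m n => (integrableOn_phase4 k l m n).const_mul _
  have hre := integral_re (𝕜 := ℂ) (integrable_finsetSum Finset.univ fun k _ =>
    integrable_finsetSum Finset.univ fun l _ => integrable_finsetSum Finset.univ fun m _ =>
    integrable_finsetSum Finset.univ fun n _ => hphase k l m n)
  simp only [RCLike.re_eq_complex_re] at hre
  have hval : ∫ χ in Set.pi Set.univ (fun _ : QIdx N1 × QIdx N2 => Set.Ico (0 : ℝ) (2 * Real.pi)),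
      ∑ k, ∑ l, ∑ m, ∑ n, ((2 ^ (N1 + N2) : ℂ)⁻¹ ^ 2 *
      (if k.2 = l.2 ∧ l.1 = m.1 ∧ m.2 = n.2 ∧ n.1 = k.1 then 1 else 0)) *
        phase4 χ k l m n = (((2 * Real.pi) ^ (2 ^ (N1 + N2)) *
        ((2 ^ N1 : ℝ)⁻¹ + (2 ^ N2 : ℝ)⁻¹ - (2 ^ (N1 + N2) : ℝ)⁻¹) : ℝ) : ℂ) := by
    rw [integral_finsetSum _ fun k _ => integrable_finsetSum Finset.univ fun l _ =>
      integrable_finsetSum Finset.univ fun m _ =>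
      integrable_finsetSum Finset.univ fun n _ => hphase k l m n]
    have e : ∀ k : QIdx N1 × QIdx N2, _ := fun k => integral_finsetSum Finset.univ fun l _ =>
      integrable_finsetSum Finset.univ fun m _ =>
      integrable_finsetSum Finset.univ fun n _ => hphase k l m n
    have e2 : ∀ k l : QIdx N1 × QIdx N2, _ := fun k l => integral_finsetSum Finset.univ fun m _ =>
      integrable_finsetSum Finset.univ fun n _ => hphase k l m n
    have e3 : ∀ k l m : QIdx N1 × QIdx N2, _ := fun k l m =>
      integral_finsetSum Finset.univ fun n _ => hphase k l m n
    simp_rw [e, e2, e3, integral_const_mul, integral_phase4, hcard]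
    have e4 : ∀ k l m n : QIdx N1 × QIdx N2, ((2 ^ (N1 + N2) : ℂ)⁻¹ ^ 2 *
      (if k.2 = l.2 ∧ l.1 = m.1 ∧ m.2 = n.2 ∧ n.1 = k.1 then 1 else 0)) *
      ((2 * Real.pi : ℂ) ^ 2 ^ (N1 + N2) *
        ((if k = l ∧ m = n then 1 else 0) + (if k = n ∧ l = m then 1 else 0)
          - (if k = l ∧ l = m ∧ m = n then 1 else 0))) =
      ((2 ^ (N1 + N2) : ℂ)⁻¹ ^ 2 * (2 * Real.pi : ℂ) ^ 2 ^ (N1 + N2)) *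
      ((if k.2 = l.2 ∧ l.1 = m.1 ∧ m.2 = n.2 ∧ n.1 = k.1 then 1 else 0) *
        ((if k = l ∧ m = n then 1 else 0) + (if k = n ∧ l = m then 1 else 0)
          - (if k = l ∧ l = m ∧ m = n then 1 else 0))) := fun k l m n => by ring
    simp_rw [e4, ← Finset.mul_sum]
    rw [index_sum]
    push_cast
    rw [pow_add]
    field_simp
  -- The inner integral is constant in `ζ`, so the outer one is a multiple of the volume.
  rw [hre, hval, Complex.ofReal_re, setIntegral_const, volume_phases, hcard, smul_eq_mul]
  have : (2 * Real.pi) ^ (2 ^ (N1 + N2)) ≠ 0 := by positivity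
  field_simp
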